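/- arXiv:1103.3401 — 2 statements merged into one kernel-verified Lean document; each statement's English description precedes it below -/
import Mathlib

section
/- Let (X,d) be a non-compact proper complete separable metric space with base point x0 and 1 <= p < infinity. Then for every eps > 0 the closed ball {mu in P_p(X) : w_p(mu, delta_{x0}) <= eps} is not compact in (P_p(X), w_p); in particular the Wasserstein space (P_p(X), w_p) is not locally compact. -/
open MeasureTheory Topology Filter Metric Set
open scoped ENNReal NNReal

noncomputable section

variable {X : Type*}

/-- `π` is a coupling of `μ` and `ν`, i.e. a measure on `X × X` with marginals `μ` and `ν`. -/
def IsCoupling [MeasurableSpace X] (π : Measure (X × X)) (μ ν : Measure X) : Prop :=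
  π.map Prod.fst = μ ∧ π.map Prod.snd = ν

/-- The `p`-th power optimal transport cost between `μ` and `ν`. -/
def wCost [MetricSpace X] [MeasurableSpace X] (p : ℝ) (μ ν : Measure X) : ℝ≥0∞ :=
  ⨅ π ∈ {π : Measure (X × X) | IsProbabilityMeasure π ∧ IsCoupling π μ ν},
    ∫⁻ q, ENNReal.ofReal (dist q.1 q.2 ^ p) ∂π

/-- The Wasserstein distance of order `p` (the `p`-th root of the optimal cost), as a real
number. -/
def Wp [MetricSpace X] [MeasurableSpace X] (p : ℝ) (μ ν : Measure X) : ℝ :=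
  ((wCost p μ ν) ^ (1 / p)).toReal

/-- `μ` has finite `p`-th moment about the base point `x₀`. -/
def FiniteMoment [MetricSpace X] [MeasurableSpace X] (p : ℝ) (x₀ : X) (μ : Measure X) : Prop :=
  ∫⁻ x, ENNReal.ofReal (dist x₀ x ^ p) ∂μ < ⊤

/-- The Wasserstein space `P_p(X)`: Borel probability measures with finite `p`-th moment. -/
def Pp [MetricSpace X] [MeasurableSpace X] (p : ℝ) (x₀ : X) : Set (Measure X) :=
  {μ | IsProbabilityMeasure μ ∧ FiniteMoment p x₀ μ}

/-- The convex combination `t • μ + (1 - t) • ν` of two measures. -/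
def mix [MeasurableSpace X] (t : ℝ) (μ ν : Measure X) : Measure X :=
  ENNReal.ofReal t • μ + ENNReal.ofReal (1 - t) • ν

/-- `μₙ → μ` in the weak topology: integrals of bounded continuous functions converge. -/
def WeakConv [MeasurableSpace X] [TopologicalSpace X] (μs : ℕ → Measure X) (μ : Measure X) :
    Prop :=
  ∀ g : BoundedContinuousFunction X ℝ,
    Tendsto (fun n => ∫ x, g x ∂(μs n)) atTop (𝓝 (∫ x, g x ∂μ))

/-- `μₙ → μ` with respect to the Wasserstein distance of order `p`. -/
def WpTendsto [MetricSpace X] [MeasurableSpace X] (p : ℝ) (μs : ℕ → Measure X)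
    (μ : Measure X) : Prop :=
  Tendsto (fun n => Wp p (μs n) μ) atTop (𝓝 0)

/-- A set of measures is sequentially compact for the Wasserstein distance of order `p`. -/
def WpSeqCompact [MetricSpace X] [MeasurableSpace X] (p : ℝ) (S : Set (Measure X)) : Prop :=
  ∀ μs : ℕ → Measure X, (∀ n, μs n ∈ S) →
    ∃ μ ∈ S, ∃ φ : ℕ → ℕ, StrictMono φ ∧ WpTendsto p (fun n => μs (φ n)) μ

/-- A set of measures is sequentially compact for the weak topology. -/
def WeakSeqCompact [MeasurableSpace X] [TopologicalSpace X] (S : Set (Measure X)) : Prop :=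
  ∀ μs : ℕ → Measure X, (∀ n, μs n ∈ S) →
    ∃ μ ∈ S, ∃ φ : ℕ → ℕ, StrictMono φ ∧ WeakConv (fun n => μs (φ n)) μ

/-!
Put mass `(ε / d(x₀, y)) ^ p` at a point `y` far away and the rest at `x₀`. This measure is at
distance `ε` from `δ_{x₀}`, because all of its `p`-th moment, which equals `ε ^ p`, is carried
by `y`. Along a `w_p`-convergent sequence, however, the `p`-th moment carried by the points at
distance at least `R` from `x₀` tends to `0` as `R → ∞` along with the index: mass that far out
is either transported over at least half of its distance to `x₀`, or goes to a point at least
half as far out, where the limit measure has little moment left. Letting `y` escape to infinity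
thus gives a sequence in the ball without convergent subsequence.
-/

lemma ofReal_rpow_le_two_rpow_mul {a b p : ℝ} (hp : 0 ≤ p) (ha : 0 ≤ a) (h : a / 2 ≤ b) :
    ENNReal.ofReal (a ^ p) ≤ 2 ^ p * ENNReal.ofReal (b ^ p) := by
  have hb : 0 ≤ b := (div_nonneg ha zero_le_two).trans h
  calc ENNReal.ofReal (a ^ p)
      ≤ ENNReal.ofReal ((2 * b) ^ p) := by gcongr; linarith
    _ = ENNReal.ofReal (2 ^ p) * ENNReal.ofReal (b ^ p) := by
      rw [Real.mul_rpow zero_le_two hb, ENNReal.ofReal_mul (by positivity)]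
    _ = 2 ^ p * ENNReal.ofReal (b ^ p) := by
      rw [← ENNReal.ofReal_rpow_of_pos two_pos, ENNReal.ofReal_ofNat]

section Coupling

variable [MeasurableSpace X] {μ ν : Measure X} {π : Measure (X × X)}

lemma IsCoupling.lintegral_fst (hπ : IsCoupling π μ ν) {f : X → ℝ≥0∞} (hf : Measurable f) :
    ∫⁻ q, f q.1 ∂π = ∫⁻ x, f x ∂μ := by
  rw [← hπ.1, lintegral_map hf measurable_fst]

lemma IsCoupling.lintegral_snd (hπ : IsCoupling π μ ν) {f : X → ℝ≥0∞} (hf : Measurable f) :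
    ∫⁻ q, f q.2 ∂π = ∫⁻ x, f x ∂ν := by
  rw [← hπ.2, lintegral_map hf measurable_snd]

lemma isCoupling_prod (μ ν : Measure X) [IsProbabilityMeasure μ] [IsProbabilityMeasure ν] :
    IsCoupling (μ.prod ν) μ ν := by
  simp [IsCoupling]

end Coupling

section Mix

variable [MeasurableSpace X]

lemma isProbabilityMeasure_mix {t : ℝ} (ht₀ : 0 ≤ t) (ht₁ : t ≤ 1) (μ ν : Measure X)
    [IsProbabilityMeasure μ] [IsProbabilityMeasure ν] : IsProbabilityMeasure (mix t μ ν) := by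
  constructor
  simp [mix, ← ENNReal.ofReal_add ht₀ (sub_nonneg.2 ht₁)]

lemma lintegral_mix (t : ℝ) (μ ν : Measure X) (f : X → ℝ≥0∞) :
    ∫⁻ x, f x ∂(mix t μ ν) =
      ENNReal.ofReal t * ∫⁻ x, f x ∂μ + ENNReal.ofReal (1 - t) * ∫⁻ x, f x ∂ν := by
  simp [mix]

end Mix

section Cost

variable [MetricSpace X] [MeasurableSpace X] {p : ℝ} {μ ν : Measure X}

lemma wCost_le_lintegral_prod (p : ℝ) (μ ν : Measure X)
    [IsProbabilityMeasure μ] [IsProbabilityMeasure ν] :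
    wCost p μ ν ≤ ∫⁻ q, ENNReal.ofReal (dist q.1 q.2 ^ p) ∂(μ.prod ν) :=
  iInf₂_le (μ.prod ν) ⟨inferInstance, isCoupling_prod μ ν⟩

lemma wCost_dirac_le (p : ℝ) (x₀ : X) (μ : Measure X) [IsProbabilityMeasure μ] :
    wCost p μ (Measure.dirac x₀) ≤ ∫⁻ x, ENNReal.ofReal (dist x₀ x ^ p) ∂μ := by
  refine (wCost_le_lintegral_prod p μ _).trans ?_
  simp_rw [Measure.prod_dirac, dist_comm x₀]
  -- Not `lintegral_map`: `dist` need not be measurable for the product `σ`-algebra.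
  exact lintegral_map_le _ _

lemma Wp_le_of_wCost_le {ε : ℝ} (hp : 0 < p) (hε : 0 ≤ ε)
    (h : wCost p μ ν ≤ ENNReal.ofReal (ε ^ p)) : Wp p μ ν ≤ ε := by
  refine ENNReal.toReal_le_of_le_ofReal hε ?_
  calc wCost p μ ν ^ (1 / p)
      ≤ ENNReal.ofReal (ε ^ p) ^ (1 / p) := by gcongr
    _ = ENNReal.ofReal ε := by
      rw [← ENNReal.ofReal_rpow_of_nonneg hε hp.le, one_div, ENNReal.rpow_rpow_inv hp.ne']

lemma ofReal_Wp_rpow (hp : 0 < p) (h : wCost p μ ν ≠ ⊤) :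
    ENNReal.ofReal (Wp p μ ν) ^ p = wCost p μ ν := by
  rw [Wp, ENNReal.ofReal_toReal (ENNReal.rpow_ne_top_of_nonneg (by positivity) h), one_div,
    ENNReal.rpow_inv_rpow hp.ne']

variable [OpensMeasurableSpace X]

lemma measurable_ofReal_dist_rpow (p : ℝ) (x₀ : X) :
    Measurable fun x => ENNReal.ofReal (dist x₀ x ^ p) :=
  ((continuous_const.dist continuous_id).measurable.pow_const p).ennreal_ofReal

lemma wCost_le_two_rpow_mul_add (hp : 0 ≤ p) (x₀ : X) (μ ν : Measure X)
    [IsProbabilityMeasure μ] [IsProbabilityMeasure ν] :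
    wCost p μ ν ≤ 2 ^ p * (∫⁻ x, ENNReal.ofReal (dist x₀ x ^ p) ∂μ +
      ∫⁻ x, ENNReal.ofReal (dist x₀ x ^ p) ∂ν) := by
  have hmeas := measurable_ofReal_dist_rpow p x₀
  have hπ := isCoupling_prod μ ν
  rw [← hπ.lintegral_fst hmeas, ← hπ.lintegral_snd hmeas,
    ← lintegral_add_left (hmeas.fun_comp measurable_fst),
    ← lintegral_const_mul' _ _ (ENNReal.rpow_ne_top_of_nonneg hp ENNReal.ofNat_ne_top)]
  refine (wCost_le_lintegral_prod p μ ν).trans (lintegral_mono fun q => ?_)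
  have htri : dist q.1 q.2 ≤ dist x₀ q.1 + dist x₀ q.2 := dist_triangle_left _ _ _
  rw [mul_add]
  rcases le_total (dist x₀ q.1) (dist x₀ q.2) with hle | hle
  · exact le_add_left (ofReal_rpow_le_two_rpow_mul hp dist_nonneg (by linarith))
  · exact le_add_right (ofReal_rpow_le_two_rpow_mul hp dist_nonneg (by linarith))

lemma wCost_ne_top {x₀ : X} (hp : 0 ≤ p) (hμ : μ ∈ Pp p x₀) (hν : ν ∈ Pp p x₀) :
    wCost p μ ν ≠ ⊤ := by
  have := hμ.1
  have := hν.1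
  exact ne_top_of_le_ne_top
    (ENNReal.mul_ne_top (ENNReal.rpow_ne_top_of_nonneg hp ENNReal.ofNat_ne_top)
      (ENNReal.add_ne_top.2 ⟨hμ.2.ne, hν.2.ne⟩))
    (wCost_le_two_rpow_mul_add hp x₀ μ ν)

lemma WpTendsto.tendsto_wCost {x₀ : X} {μs : ℕ → Measure X} (hp : 0 < p)
    (hμs : ∀ n, μs n ∈ Pp p x₀) (hμ : μ ∈ Pp p x₀) (h : WpTendsto p μs μ) :
    Tendsto (fun n => wCost p (μs n) μ) atTop (𝓝 0) := by
  have hpow : Tendsto (fun n => ENNReal.ofReal (Wp p (μs n) μ) ^ p) atTop (𝓝 0) := by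
    simpa [hp] using (ENNReal.tendsto_ofReal h).ennrpow_const p
  exact hpow.congr fun n => ofReal_Wp_rpow hp (wCost_ne_top hp.le (hμs n) hμ)

end Cost

section TailMoment

variable [MetricSpace X] [MeasurableSpace X]

/-- The part of the `p`-th moment of `μ` about `x₀` carried by the points at distance at least `R`
from `x₀`: a family of measures has uniformly integrable `p`-th moments if its `tailMoment p x₀ R`
tend to `0` uniformly as `R → ∞`. The restriction to the tail is an indicator in the integrand, so
that tails of two measures can be compared pointwise under a coupling. -/
def tailMoment (p : ℝ) (x₀ : X) (R : ℝ) (μ : Measure X) : ℝ≥0∞ :=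
  ∫⁻ x, {x | R ≤ dist x₀ x}.indicator (fun x => ENNReal.ofReal (dist x₀ x ^ p)) x ∂μ

variable {p : ℝ} {x₀ : X} {μ : Measure X}

lemma tailMoment_zero (p : ℝ) (x₀ : X) (μ : Measure X) :
    tailMoment p x₀ 0 μ = ∫⁻ x, ENNReal.ofReal (dist x₀ x ^ p) ∂μ := by
  simp [tailMoment]

variable [OpensMeasurableSpace X]

lemma measurable_indicator_ofReal_dist_rpow (p : ℝ) (x₀ : X) (R : ℝ) :
    Measurable ({x | R ≤ dist x₀ x}.indicator fun x => ENNReal.ofReal (dist x₀ x ^ p)) :=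
  (measurable_ofReal_dist_rpow p x₀).indicator
    (isClosed_le continuous_const (continuous_const.dist continuous_id)).measurableSet

lemma FiniteMoment.tendsto_tailMoment (hμ : FiniteMoment p x₀ μ) :
    Tendsto (fun R => tailMoment p x₀ R μ) atTop (𝓝 0) := by
  rw [← lintegral_zero (α := X) (μ := μ)]
  refine tendsto_lintegral_filter_of_dominated_convergence _
    (.of_forall (measurable_indicator_ofReal_dist_rpow p x₀))
    (.of_forall fun R => .of_forall (indicator_le_self _ _)) hμ.ne (.of_forall fun x => ?_)
  refine tendsto_const_nhds.congr' ?_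
  filter_upwards [eventually_gt_atTop (dist x₀ x)] with R hR
  have hx : x ∉ {x | R ≤ dist x₀ x} := hR.not_ge
  exact (indicator_of_notMem hx _).symm

lemma tailMoment_le_two_rpow_mul_add (hp : 0 ≤ p) (x₀ : X) (R : ℝ) (μ ν : Measure X) :
    tailMoment p x₀ R μ ≤ 2 ^ p * (wCost p μ ν + tailMoment p x₀ (R / 2) ν) := by
  have h_ne_zero : (2 : ℝ≥0∞) ^ p ≠ 0 := by simp
  have h_ne_top : (2 : ℝ≥0∞) ^ p ≠ ⊤ :=
    ENNReal.rpow_ne_top_of_nonneg hp ENNReal.ofNat_ne_top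
  simp_rw [wCost, ENNReal.iInf_add, ENNReal.mul_iInf_of_ne h_ne_zero h_ne_top]
  refine le_iInf₂ fun π ⟨_, hπ⟩ => ?_
  have hmeas := measurable_indicator_ofReal_dist_rpow p x₀
  rw [tailMoment, tailMoment, ← hπ.lintegral_fst (hmeas R), ← hπ.lintegral_snd (hmeas (R / 2)),
    ← lintegral_add_right _ ((hmeas (R / 2)).fun_comp measurable_snd),
    ← lintegral_const_mul' _ _ h_ne_top]
  refine lintegral_mono fun q => indicator_apply_le' (fun hq : R ≤ dist x₀ q.1 => ?_)
    fun _ => zero_le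
  have htri : dist x₀ q.1 ≤ dist x₀ q.2 + dist q.1 q.2 := dist_triangle_right _ _ _
  rw [mul_add]
  rcases le_total (dist x₀ q.1 / 2) (dist x₀ q.2) with hle | hle
  · have hq₂ : q.2 ∈ {x | R / 2 ≤ dist x₀ x} :=
      (div_le_div_of_nonneg_right hq zero_le_two).trans hle
    rw [indicator_of_mem hq₂]
    exact le_add_left (ofReal_rpow_le_two_rpow_mul hp dist_nonneg hle)
  · exact le_add_right (ofReal_rpow_le_two_rpow_mul hp dist_nonneg (by linarith))

lemma WpTendsto.tendsto_tailMoment {μs : ℕ → Measure X} {R : ℕ → ℝ} (hp : 0 < p)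
    (hμs : ∀ n, μs n ∈ Pp p x₀) (hμ : μ ∈ Pp p x₀) (h : WpTendsto p μs μ)
    (hR : Tendsto R atTop atTop) :
    Tendsto (fun n => tailMoment p x₀ (R n) (μs n)) atTop (𝓝 0) := by
  have hcost := h.tendsto_wCost hp hμs hμ
  have htail : Tendsto (fun n => tailMoment p x₀ (R n / 2) μ) atTop (𝓝 0) :=
    hμ.2.tendsto_tailMoment.comp (hR.atTop_div_const two_pos)
  have hbound : Tendsto (fun n => 2 ^ p * (wCost p (μs n) μ + tailMoment p x₀ (R n / 2) μ))
      atTop (𝓝 0) := by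
    simpa using ENNReal.Tendsto.const_mul (hcost.add htail)
      (.inr (ENNReal.rpow_ne_top_of_nonneg hp.le ENNReal.ofNat_ne_top))
  exact tendsto_of_tendsto_of_tendsto_of_le_of_le tendsto_const_nhds hbound
    (fun _ => zero_le) fun n => tailMoment_le_two_rpow_mul_add hp.le x₀ (R n) (μs n) μ

end TailMoment

section EscapingMeasure

variable [MetricSpace X] [MeasurableSpace X]

/-- The two-point measure on `{y, x₀}` whose mass at `y` is chosen to make its `p`-th moment about
`x₀` equal to `ε ^ p`, so that it stays at `w_p`-distance `ε` from `δ_{x₀}` while `y` escapes to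
infinity. It is meant for `0 < ε ≤ dist x₀ y`, when both weights lie in `[0, 1]`. -/
def escapingMeasure (p : ℝ) (x₀ : X) (ε : ℝ) (y : X) : Measure X :=
  mix ((ε / dist x₀ y) ^ p) (Measure.dirac y) (Measure.dirac x₀)

variable {p ε : ℝ} {x₀ y : X}

lemma isProbabilityMeasure_escapingMeasure (hp : 0 ≤ p) (hε : 0 ≤ ε) (hy : ε ≤ dist x₀ y) :
    IsProbabilityMeasure (escapingMeasure p x₀ ε y) :=
  isProbabilityMeasure_mix (by positivity)
    (Real.rpow_le_one (by positivity) (div_le_one_of_le₀ hy dist_nonneg) hp) _ _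

variable [OpensMeasurableSpace X]

lemma tailMoment_escapingMeasure {R : ℝ} (hp : 0 < p) (hε : 0 ≤ ε) (hy : 0 < dist x₀ y)
    (hR : R ≤ dist x₀ y) :
    tailMoment p x₀ R (escapingMeasure p x₀ ε y) = ENNReal.ofReal (ε ^ p) := by
  have hmass : (ε / dist x₀ y) ^ p * dist x₀ y ^ p = ε ^ p := by
    rw [← Real.mul_rpow (by positivity) hy.le, div_mul_cancel₀ _ hy.ne']
  have hy_mem : y ∈ {x | R ≤ dist x₀ x} := hR
  simp [tailMoment, escapingMeasure, lintegral_mix, indicator_of_mem hy_mem, indicator_apply _ _ x₀,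
    Real.zero_rpow hp.ne', ← ENNReal.ofReal_mul (Real.rpow_nonneg (div_nonneg hε hy.le) p), hmass]

lemma lintegral_escapingMeasure (hp : 0 < p) (hε : 0 ≤ ε) (hy : 0 < dist x₀ y) :
    ∫⁻ x, ENNReal.ofReal (dist x₀ x ^ p) ∂(escapingMeasure p x₀ ε y) = ENNReal.ofReal (ε ^ p) := by
  rw [← tailMoment_zero, tailMoment_escapingMeasure hp hε hy dist_nonneg]

lemma escapingMeasure_mem_Pp (hp : 0 < p) (hε : 0 < ε) (hy : ε ≤ dist x₀ y) :
    escapingMeasure p x₀ ε y ∈ Pp p x₀ :=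
  ⟨isProbabilityMeasure_escapingMeasure hp.le hε.le hy,
    (lintegral_escapingMeasure hp hε.le (hε.trans_le hy)).trans_lt ENNReal.ofReal_lt_top⟩

lemma Wp_escapingMeasure_dirac_le (hp : 0 < p) (hε : 0 < ε) (hy : ε ≤ dist x₀ y) :
    Wp p (escapingMeasure p x₀ ε y) (Measure.dirac x₀) ≤ ε := by
  have := isProbabilityMeasure_escapingMeasure hp.le hε.le hy
  refine Wp_le_of_wCost_le hp hε.le ((wCost_dirac_le p x₀ _).trans ?_)
  exact (lintegral_escapingMeasure hp hε.le (hε.trans_le hy)).le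

end EscapingMeasure

lemma exists_seq_le_dist_tendsto_atTop [PseudoMetricSpace X] (hX : ¬ BoundedSpace X) (x₀ : X)
    (C : ℝ) : ∃ y : ℕ → X, (∀ n, C ≤ dist x₀ (y n)) ∧
      Tendsto (fun n => dist x₀ (y n)) atTop atTop := by
  have : (Bornology.cobounded X).NeBot := ⟨mt Bornology.cobounded_eq_bot_iff.1 hX⟩
  have hdist := tendsto_dist_left_cobounded_atTop x₀
  choose y hy using fun n : ℕ => (hdist.eventually_ge_atTop (max C n)).exists
  exact ⟨y, fun n => (le_max_left _ _).trans (hy n),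
    tendsto_atTop_mono (fun n => (le_max_right _ _).trans (hy n)) tendsto_natCast_atTop_atTop⟩

theorem wasserstein_ball_not_compact_general
    [MetricSpace X] [MeasurableSpace X] [OpensMeasurableSpace X] (hX : ¬ BoundedSpace X)
    {p : ℝ} (hp : 0 < p) (x₀ : X) {ε : ℝ} (hε : 0 < ε) :
    ¬ WpSeqCompact p {μ : Measure X | μ ∈ Pp p x₀ ∧ Wp p μ (Measure.dirac x₀) ≤ ε} := by
  intro hcompact
  obtain ⟨y, hy, hy_tendsto⟩ := exists_seq_le_dist_tendsto_atTop hX x₀ ε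
  have hmem n := escapingMeasure_mem_Pp hp hε (hy n)
  obtain ⟨μ, ⟨hμ, -⟩, φ, hφ, hlim⟩ := hcompact (fun n => escapingMeasure p x₀ ε (y n))
    fun n => ⟨hmem n, Wp_escapingMeasure_dirac_le hp hε (hy n)⟩
  have htail := hlim.tendsto_tailMoment hp (fun n => hmem (φ n)) hμ
    (hy_tendsto.comp hφ.tendsto_atTop)
  have hconst n := tailMoment_escapingMeasure hp hε.le (hε.trans_le (hy (φ n))) le_rfl
  have hzero : ENNReal.ofReal (ε ^ p) = 0 :=
    tendsto_nhds_unique tendsto_const_nhds (htail.congr hconst)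
  exact (ENNReal.ofReal_pos.2 (Real.rpow_pos_of_pos hε p)).ne' hzero

/-- In the Wasserstein space of order `p` over a non-compact proper complete separable metric
space, no closed ball around `δ_{x₀}` of positive radius is (sequentially) compact for `w_p`;
in particular `(P_p(X), w_p)` is not locally compact. -/
theorem wasserstein_ball_not_compact
    [MetricSpace X] [MeasurableSpace X] [BorelSpace X] [ProperSpace X] [CompleteSpace X]
    [TopologicalSpace.SeparableSpace X] (hX : ¬ CompactSpace X)
    (p : ℝ) (hp : 1 ≤ p) (x₀ : X) (ε : ℝ) (hε : 0 < ε) :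
    ¬ WpSeqCompact p {μ : Measure X | μ ∈ Pp p x₀ ∧ Wp p μ (Measure.dirac x₀) ≤ ε} := by
  exact wasserstein_ball_not_compact_general
    (fun h => hX (compactSpace_iff_isBounded_univ.2 (Bornology.isBounded_univ.2 h)))
    (zero_lt_one.trans_le hp) x₀ hε
end
end

section
/- Let X be a complete separable metric space, f: X -> X a continuous map with a fixed point x0 (f(x0) = x0), and 0 < eps < 1. Define P_eps: P(X) -> P(X) by P_eps(mu) = (1-eps) * f_*(mu) + eps * delta_{x0}. Then: (i) for every mu in P(X) the Levy-Prokhorov distance satisfies d_LP(P_eps(mu), f_*(mu)) <= eps; (ii) delta_{x0} is the unique fixed point of P_eps, and for every mu in P(X) the iterates P_eps^n(mu) converge weakly to delta_{x0} as n -> infinity. -/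
/-!
Let `ρ` be any `f`-invariant probability measure and `P μ = (1 - ε) f_* μ + ε ρ`; the theorem is
the case `ρ = δ_{x₀}`. Since `f_* ρ = ρ`, the noise added at successive steps accumulates to
`P^n μ = (1 - ε)^n f^n_* μ + (1 - (1 - ε)^n) ρ`. The first summand has mass tending to zero, so
`∫ g d(P^n μ) → ∫ g dρ` for every bounded measurable `g`, with geometric rate. Taking `g` continuous
gives weak convergence; taking `g` an indicator identifies every fixed point with `ρ`.
-/

open MeasureTheory Topology Filter Metric Set
open scoped ENNReal NNReal

noncomputable section

variable {X : Type*}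

section Mix

variable [MeasurableSpace X] {Y : Type*} [MeasurableSpace Y]
  {E : Type*} [NormedAddCommGroup E] [NormedSpace ℝ E] {s t C : ℝ} {μ ν : Measure X}

lemma mix_one (μ ν : Measure X) : mix 1 μ ν = μ := by
  simp [mix]

lemma mix_self (ht0 : 0 ≤ t) (ht1 : t ≤ 1) (μ : Measure X) : mix t μ μ = μ := by
  rw [mix, ← add_smul, ← ENNReal.ofReal_add ht0 (sub_nonneg.2 ht1), add_sub_cancel,
    ENNReal.ofReal_one, one_smul]

lemma mix_mix_right (hs0 : 0 ≤ s) (hs1 : s ≤ 1) (ht1 : t ≤ 1) (μ ν : Measure X) :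
    mix s (mix t μ ν) ν = mix (s * t) μ ν := by
  have weight_right : ENNReal.ofReal s * ENNReal.ofReal (1 - t) + ENNReal.ofReal (1 - s) =
      ENNReal.ofReal (1 - s * t) := by
    rw [← ENNReal.ofReal_mul hs0,
      ← ENNReal.ofReal_add (mul_nonneg hs0 (sub_nonneg.2 ht1)) (sub_nonneg.2 hs1)]
    ring_nf
  simp only [mix, smul_add, smul_smul]
  rw [add_assoc, ← add_smul, weight_right, ENNReal.ofReal_mul hs0]

lemma map_mix {f : X → Y} (hf : Measurable f) (t : ℝ) (μ ν : Measure X) :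
    (mix t μ ν).map f = mix t (μ.map f) (ν.map f) := by
  simp only [mix, Measure.map_add _ _ hf, Measure.map_smul]

lemma isProbabilityMeasure_mix_s18 (ht0 : 0 ≤ t) (ht1 : t ≤ 1) [IsProbabilityMeasure μ]
    [IsProbabilityMeasure ν] : IsProbabilityMeasure (mix t μ ν) where
  measure_univ := by
    simp only [mix, Measure.add_apply, Measure.smul_apply, measure_univ, smul_eq_mul, mul_one]
    rw [← ENNReal.ofReal_add ht0 (sub_nonneg.2 ht1), add_sub_cancel, ENNReal.ofReal_one]

lemma integral_mix (ht0 : 0 ≤ t) (ht1 : t ≤ 1) {g : X → E} (hgμ : Integrable g μ)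
    (hgν : Integrable g ν) :
    ∫ x, g x ∂(mix t μ ν) = t • ∫ x, g x ∂μ + (1 - t) • ∫ x, g x ∂ν := by
  rw [mix, integral_add_measure (hgμ.smul_measure ENNReal.ofReal_ne_top)
      (hgν.smul_measure ENNReal.ofReal_ne_top), integral_smul_measure, integral_smul_measure,
    ENNReal.toReal_ofReal ht0, ENNReal.toReal_ofReal (sub_nonneg.2 ht1)]

lemma norm_integral_mix_sub_integral_right_le (ht0 : 0 ≤ t) (ht1 : t ≤ 1) [IsFiniteMeasure μ]
    [IsFiniteMeasure ν] {g : X → E} (hg : StronglyMeasurable g) (hgC : ∀ x, ‖g x‖ ≤ C) :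
    ‖∫ x, g x ∂(mix t μ ν) - ∫ x, g x ∂ν‖ ≤ t * (C * μ.real univ + C * ν.real univ) := by
  have integrable_g (κ : Measure X) [IsFiniteMeasure κ] : Integrable g κ :=
    .of_bound hg.aestronglyMeasurable C (.of_forall hgC)
  calc ‖∫ x, g x ∂(mix t μ ν) - ∫ x, g x ∂ν‖
      = t * ‖∫ x, g x ∂μ - ∫ x, g x ∂ν‖ := by
        rw [integral_mix ht0 ht1 (integrable_g μ) (integrable_g ν), sub_smul, one_smul,
          ← add_sub_assoc, add_sub_right_comm, add_sub_cancel_right, ← smul_sub,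
          norm_smul_of_nonneg ht0]
    _ ≤ t * (C * μ.real univ + C * ν.real univ) := by
        gcongr
        exact norm_sub_le_of_le (norm_integral_le_of_norm_le_const (.of_forall hgC))
          (norm_integral_le_of_norm_le_const (.of_forall hgC))

end Mix

lemma levyProkhorovDist_mix_left_le [PseudoEMetricSpace X] [MeasurableSpace X]
    [OpensMeasurableSpace X] {t : ℝ} (ht0 : 0 ≤ t) (ht1 : t ≤ 1) (μ ν : Measure X)
    [IsProbabilityMeasure μ] [IsProbabilityMeasure ν] :
    levyProkhorovDist (mix t μ ν) μ ≤ 1 - t := by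
  have := isProbabilityMeasure_mix_s18 (μ := μ) (ν := ν) ht0 ht1
  refine levyProkhorovDist_le_of_forall_le _ _ (sub_nonneg.2 ht1) fun δ B hδ _ ↦ ?_
  calc mix t μ ν B = ENNReal.ofReal t * μ B + ENNReal.ofReal (1 - t) * ν B := rfl
    _ ≤ μ B + ENNReal.ofReal (1 - t) :=
        add_le_add (mul_le_of_le_one_left' (ENNReal.ofReal_le_one.2 ht1))
          (mul_le_of_le_one_right' prob_le_one)
    _ ≤ μ (thickening δ B) + ENNReal.ofReal δ := by
        gcongr
        exact self_subset_thickening ((sub_nonneg.2 ht1).trans_lt hδ) B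

lemma measurePreserving_dirac_of_isFixedPt [MeasurableSpace X] {f : X → X} (hf : Measurable f)
    {x : X} (hx : Function.IsFixedPt f x) :
    MeasurePreserving f (Measure.dirac x) (Measure.dirac x) :=
  ⟨hf, by rw [Measure.map_dirac' hf, hx]⟩

/-- The noisy pushforward `P_ε(μ) = (1 - ε) f_* μ + ε ρ`: the law of a random point distributed
according to `μ` that is moved by `f` with probability `1 - ε` and resampled from `ρ` with
probability `ε`. -/
def noisyPushforward [MeasurableSpace X] (ε : ℝ) (f : X → X) (ρ μ : Measure X) : Measure X :=
  mix (1 - ε) (μ.map f) ρ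

section NoisyPushforward

variable [MeasurableSpace X] {E : Type*} [NormedAddCommGroup E] [NormedSpace ℝ E]
  {f : X → X} {ε : ℝ} {ρ : Measure X}

lemma noisyPushforward_invariant (hf : MeasurePreserving f ρ ρ) (hε0 : 0 ≤ ε) (hε1 : ε ≤ 1) :
    noisyPushforward ε f ρ ρ = ρ := by
  rw [noisyPushforward, hf.map_eq, mix_self (sub_nonneg.2 hε1) (sub_le_self 1 hε0)]

lemma iterate_noisyPushforward (hf : MeasurePreserving f ρ ρ) (hε0 : 0 ≤ ε) (hε1 : ε ≤ 1)
    (μ : Measure X) (n : ℕ) :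
    (noisyPushforward ε f ρ)^[n] μ = mix ((1 - ε) ^ n) (μ.map f^[n]) ρ := by
  have h0 : 0 ≤ 1 - ε := sub_nonneg.2 hε1
  have h1 : 1 - ε ≤ 1 := sub_le_self 1 hε0
  induction n with
  | zero => rw [Function.iterate_zero_apply, Function.iterate_zero, Measure.map_id, pow_zero,
      mix_one]
  | succ n ih =>
    rw [Function.iterate_succ_apply', ih, noisyPushforward, map_mix hf.measurable, hf.map_eq,
      Measure.map_map hf.measurable (hf.measurable.iterate n), ← Function.iterate_succ',
      mix_mix_right h0 h1 (pow_le_one₀ h0 h1), pow_succ']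

lemma tendsto_integral_iterate_noisyPushforward [IsFiniteMeasure ρ]
    (hf : MeasurePreserving f ρ ρ) (hε0 : 0 < ε) (hε1 : ε ≤ 1) (μ : Measure X)
    [IsFiniteMeasure μ] {g : X → E} (hg : StronglyMeasurable g) {C : ℝ} (hgC : ∀ x, ‖g x‖ ≤ C) :
    Tendsto (fun n ↦ ∫ x, g x ∂((noisyPushforward ε f ρ)^[n] μ)) atTop (𝓝 (∫ x, g x ∂ρ)) := by
  have h0 : 0 ≤ 1 - ε := sub_nonneg.2 hε1
  have h1 : 1 - ε < 1 := sub_lt_self 1 hε0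
  have rate (n : ℕ) : ‖∫ x, g x ∂((noisyPushforward ε f ρ)^[n] μ) - ∫ x, g x ∂ρ‖ ≤
      (1 - ε) ^ n * (C * μ.real univ + C * ρ.real univ) := by
    have map_univ : (μ.map f^[n]).real univ = μ.real univ :=
      map_measureReal_apply (hf.measurable.iterate n) .univ
    rw [iterate_noisyPushforward hf hε0.le hε1, ← map_univ]
    exact norm_integral_mix_sub_integral_right_le (pow_nonneg h0 n) (pow_le_one₀ h0 h1.le) hg hgC
  have rate_tendsto : Tendsto (fun n : ℕ ↦ (1 - ε) ^ n * (C * μ.real univ + C * ρ.real univ))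
      atTop (𝓝 0) := by
    simpa only [zero_mul] using (tendsto_pow_atTop_nhds_zero_of_lt_one h0 h1).mul_const _
  exact tendsto_iff_norm_sub_tendsto_zero.2 (squeeze_zero (fun _ ↦ norm_nonneg _) rate rate_tendsto)

lemma eq_of_noisyPushforward_eq_self [IsFiniteMeasure ρ] (hf : MeasurePreserving f ρ ρ)
    (hε0 : 0 < ε) (hε1 : ε ≤ 1) {μ : Measure X} [IsFiniteMeasure μ]
    (hμ : noisyPushforward ε f ρ μ = μ) : μ = ρ := by
  refine Measure.ext fun s hs ↦ ?_
  have indicator_le_one (x : X) : ‖s.indicator (1 : X → ℝ) x‖ ≤ 1 :=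
    (norm_indicator_le_norm_self _ x).trans norm_one.le
  have limit := tendsto_integral_iterate_noisyPushforward hf hε0 hε1 μ
    (stronglyMeasurable_one.indicator hs) indicator_le_one
  simp only [Function.iterate_fixed hμ, integral_indicator_one hs] at limit
  rw [← measureReal_eq_measureReal_iff]
  exact tendsto_nhds_unique tendsto_const_nhds limit

lemma weakConv_iterate_noisyPushforward [TopologicalSpace X] [OpensMeasurableSpace X]
    [IsFiniteMeasure ρ] (hf : MeasurePreserving f ρ ρ) (hε0 : 0 < ε) (hε1 : ε ≤ 1)
    (μ : Measure X) [IsFiniteMeasure μ] :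
    WeakConv (fun n ↦ (noisyPushforward ε f ρ)^[n] μ) ρ := fun g ↦
  tendsto_integral_iterate_noisyPushforward hf hε0 hε1 μ g.continuous.stronglyMeasurable
    g.norm_coe_le_norm

end NoisyPushforward

theorem collapse_under_small_noise_general [PseudoEMetricSpace X] [MeasurableSpace X]
    [OpensMeasurableSpace X] {f : X → X} {ρ : Measure X} [IsProbabilityMeasure ρ]
    (hf : MeasurePreserving f ρ ρ) {ε : ℝ} (hε0 : 0 < ε) (hε1 : ε ≤ 1) :
    (∀ μ : Measure X, IsProbabilityMeasure μ →
      levyProkhorovDist (noisyPushforward ε f ρ μ) (μ.map f) ≤ ε) ∧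
    noisyPushforward ε f ρ ρ = ρ ∧
    (∀ μ : Measure X, IsFiniteMeasure μ → noisyPushforward ε f ρ μ = μ → μ = ρ) ∧
    (∀ μ : Measure X, IsFiniteMeasure μ →
      WeakConv (fun n ↦ (noisyPushforward ε f ρ)^[n] μ) ρ) := by
  refine ⟨fun μ _ ↦ ?_, noisyPushforward_invariant hf hε0.le hε1,
    fun μ _ ↦ eq_of_noisyPushforward_eq_self hf hε0 hε1,
    fun μ _ ↦ weakConv_iterate_noisyPushforward hf hε0 hε1 μ⟩
  have := Measure.isProbabilityMeasure_map (μ := μ) hf.measurable.aemeasurable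
  exact (levyProkhorovDist_mix_left_le (sub_nonneg.2 hε1) (sub_le_self 1 hε0.le) _ ρ).trans_eq
    (sub_sub_cancel 1 ε)

/-- **Generic collapse under small noise.** Let `f : X → X` be continuous with fixed point
`x₀` and `0 < ε < 1`, and let `P_ε(μ) = (1-ε) f_*(μ) + ε δ_{x₀}`. Then (i) `P_ε` is within
Lévy–Prokhorov distance `ε` of `f_*`; (ii) `δ_{x₀}` is the unique fixed point of `P_ε`
among probability measures, and all iterates `P_ε^n(μ)` converge weakly to `δ_{x₀}`. -/
theorem collapse_under_small_noise
    [MetricSpace X] [MeasurableSpace X] [BorelSpace X] [CompleteSpace X]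
    [TopologicalSpace.SeparableSpace X]
    (f : X → X) (hf : Continuous f) (x₀ : X) (hfix : f x₀ = x₀)
    (ε : ℝ) (hε0 : 0 < ε) (hε1 : ε < 1)
    (P : Measure X → Measure X)
    (hP : ∀ μ : Measure X, P μ = mix (1 - ε) (μ.map f) (Measure.dirac x₀)) :
    (∀ μ : Measure X, IsProbabilityMeasure μ →
      levyProkhorovDist (P μ) (μ.map f) ≤ ε) ∧
    (P (Measure.dirac x₀) = Measure.dirac x₀) ∧
    (∀ μ : Measure X, IsProbabilityMeasure μ → P μ = μ → μ = Measure.dirac x₀) ∧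
    (∀ μ : Measure X, IsProbabilityMeasure μ →
      WeakConv (fun n => P^[n] μ) (Measure.dirac x₀)) := by
  obtain rfl : P = noisyPushforward ε f (Measure.dirac x₀) := funext hP
  obtain ⟨dist_le, fixed, unique, weakConv⟩ := collapse_under_small_noise_general
    (measurePreserving_dirac_of_isFixedPt hf.measurable hfix) hε0 hε1.le
  exact ⟨dist_le, fixed, fun μ _ ↦ unique μ inferInstance, fun μ _ ↦ weakConv μ inferInstance⟩
end
end
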